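/- Let G be a k-connected (k ≥ 1) finite simple graph with n ≥ 9 vertices, e edges, minimum degree δ ≥ 1, and maximum degree Δ. If Inv(G) ≤ (n − k − 2)/Δ + (2(k + 2)²δ² − e²)/((k + 2)·Δ³), then G is traceable. -/

import Mathlib

open Finset

/-- The first Zagreb index of a graph: the sum of the squares of the vertex degrees. -/
def zagreb1 {V : Type*} [Fintype V] (G : SimpleGraph V) [DecidableRel G.Adj] : ℝ :=
  ∑ u, (G.degree u : ℝ) ^ 2

/-- The forgotten topological index of a graph: the sum of the cubes of the vertex degrees. -/
def forgottenIndex {V : Type*} [Fintype V] (G : SimpleGraph V) [DecidableRel G.Adj] : ℝ :=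
  ∑ u, (G.degree u : ℝ) ^ 3

/-- The inverse degree of a graph: the sum of the reciprocals of the vertex degrees. -/
noncomputable def invDegree {V : Type*} [Fintype V] (G : SimpleGraph V) [DecidableRel G.Adj] : ℝ :=
  ∑ u, 1 / (G.degree u : ℝ)

/-- The independence number of a graph: the largest cardinality of a set of pairwise
nonadjacent vertices. -/
noncomputable def indepNum {V : Type*} [Fintype V] (G : SimpleGraph V) : ℕ :=
  sSup {k | ∃ s : Finset V, s.card = k ∧ ∀ u ∈ s, ∀ v ∈ s, ¬ G.Adj u v}

/-- A graph is a regular balanced bipartite graph if its vertices can be partitioned into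
two parts of equal size with every edge joining the two parts, and all vertices have the
same degree. -/
def IsRegularBalancedBipartite {V : Type*} [Fintype V] (G : SimpleGraph V) [DecidableRel G.Adj] : Prop :=
  ∃ (A : Finset V) (r : ℕ), 2 * A.card = Fintype.card V ∧
    (∀ u v, G.Adj u v → (u ∈ A ↔ v ∉ A)) ∧ G.IsRegularOfDegree r

/-- A graph is `k`-connected if it has more than `k` vertices and removing any set of
fewer than `k` vertices leaves a connected graph. -/
def IsKConnected {V : Type*} [Fintype V] (G : SimpleGraph V) (k : ℕ) : Prop :=
  k < Fintype.card V ∧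
    ∀ S : Finset V, S.card < k → (G.induce (↑S : Set V)ᶜ).Connected

/-- A graph is traceable if it has a Hamiltonian path. -/
def IsTraceable {V : Type*} [DecidableEq V] (G : SimpleGraph V) : Prop :=
  ∃ (u v : V) (p : G.Walk u v), p.IsHamiltonian

/-! A longest path `l` missing a vertex `v` yields an independent set of `k + 2` vertices: `v`, the
first vertex of `l`, and the successors on `l` of the vertices adjacent to the component of `v` off
`l`; otherwise `l` could be rerouted through that component (Chvátal–Erdős). Since
`n / Δ ≤ Inv(G)`, and since the degrees of an independent set `I` of `k + 2` vertices add up to at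
most `e`, the hypothesis gives `((k + 2)Δ)² + e² ≤ 2((k + 2)δ)²`, where `(k + 2)δ` is at most both
`(k + 2)Δ` and `e`. So equality holds throughout, and `G` is regular and bipartite with sides `I`
and `Iᶜ` of size `k + 2`. Every vertex off `l` then lies on the side `I` of the first vertex of
`l`, so `l` covers `Iᶜ`, and its predecessor map injects `Iᶜ` into `I \ {v}`, which is too small. -/

section PairInfix

variable {α : Type*} {l : List α} {a a' b b' : α}

theorem eq_left_of_pair_infix (hl : l.Nodup) (h : [a, b] <:+: l) (h' : [a', b] <:+: l) :
    a = a' := by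
  obtain ⟨A, C, rfl⟩ := h
  obtain ⟨A', C', h⟩ := h'
  have hsplit : (A' ++ [a']) ++ b :: C' = (A ++ [a]) ++ b :: C := by simpa using h
  have hb : b ∉ A' ++ [a'] ∧ b ∉ C' := by
    have hnodup : ((A' ++ [a']) ++ b :: C').Nodup := hsplit ▸ by simpa using hl
    grind
  have hpre := ((List.append_cons_inj_of_notMem hb.1 hb.2).1 hsplit).1
  simpa using (congrArg List.getLast? hpre).symm

theorem eq_right_of_pair_infix (hl : l.Nodup) (h : [a, b] <:+: l) (h' : [a, b'] <:+: l) :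
    b = b' :=
  eq_left_of_pair_infix (List.nodup_reverse.2 hl) (by simpa using List.reverse_infix.2 h)
    (by simpa using List.reverse_infix.2 h')

theorem not_pair_infix_of_mem_head? (hl : l.Nodup) (hb : b ∈ l.head?) : ¬ [a, b] <:+: l := by
  rintro ⟨A, C, rfl⟩
  rcases A with _ | ⟨c, A⟩ <;> simp_all

theorem exists_pair_infix_of_mem_of_notMem_head? (hb : b ∈ l) (hhead : b ∉ l.head?) :
    ∃ a, [a, b] <:+: l := by
  obtain ⟨A, C, rfl⟩ := List.append_of_mem hb
  rcases A.eq_nil_or_concat with rfl | ⟨A, a, rfl⟩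
  · simp at hhead
  · exact ⟨a, A, C, by simp⟩

theorem exists_pair_infix_of_mem_of_notMem_getLast? (ha : a ∈ l) (hlast : a ∉ l.getLast?) :
    ∃ b, [a, b] <:+: l := by
  obtain ⟨A, C, rfl⟩ := List.append_of_mem ha
  rcases C with _ | ⟨b, C⟩
  · simp at hlast
  · exact ⟨b, A, C, by simp⟩

end PairInfix

section LongestPath

variable {V : Type*} {G : SimpleGraph V} {l : List V} {v w x y z : V}

/-- The vertex list of a path of `G`; the empty list is allowed. -/
def IsPathList (G : SimpleGraph V) (l : List V) : Prop :=
  l.IsChain G.Adj ∧ l.Nodup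

/-- A path of `G` with the largest possible number of vertices, given by its vertex list. -/
def IsLongestPathList (G : SimpleGraph V) (l : List V) : Prop :=
  MaximalFor (IsPathList G) List.length l

/-- Two vertices lie in the same component of `G - l`: some walk between them misses `l`. -/
def LinkedOff (G : SimpleGraph V) (l : List V) (x y : V) : Prop :=
  ∃ p : G.Walk x y, ∀ w ∈ p.support, w ∉ l

/-- The vertex `a` is adjacent to the component of `v` in `G - l`. -/
def IsAttached (G : SimpleGraph V) (l : List V) (v a : V) : Prop :=
  ∃ x, LinkedOff G l v x ∧ G.Adj a x

/-- The vertex `w` is the first vertex of `l`, or its predecessor on `l` is adjacent to the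
component of `v` in `G - l`: the part of `l` before `w` can be continued into that component. -/
def IsEntry (G : SimpleGraph V) (l : List V) (v w : V) : Prop :=
  ∃ A C, l = A ++ w :: C ∧ ∀ a ∈ A.getLast?, IsAttached G l v a

theorem exists_isLongestPathList [Finite V] (G : SimpleGraph V) :
    ∃ l, IsLongestPathList G l := by
  have := Fintype.ofFinite V
  have hfin : {l | IsPathList G l}.Finite :=
    (List.finite_length_le V (Fintype.card V)).subset fun l hl => hl.2.length_le_card
  exact hfin.exists_maximalFor List.length _ ⟨[], .nil, .nil⟩

theorem LinkedOff.refl (hx : x ∉ l) : LinkedOff G l x x :=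
  ⟨.nil, by simpa using hx⟩

theorem LinkedOff.symm (h : LinkedOff G l x y) : LinkedOff G l y x := by
  obtain ⟨p, hp⟩ := h
  exact ⟨p.reverse, by simpa using hp⟩

theorem LinkedOff.trans (h : LinkedOff G l x y) (h' : LinkedOff G l y z) : LinkedOff G l x z := by
  obtain ⟨p, hp⟩ := h
  obtain ⟨q, hq⟩ := h'
  refine ⟨p.append q, fun w hw => ?_⟩
  rcases (SimpleGraph.Walk.mem_support_append_iff p q).1 hw with hw | hw
  exacts [hp w hw, hq w hw]

theorem LinkedOff.right_notMem (h : LinkedOff G l x y) : y ∉ l := by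
  obtain ⟨p, hp⟩ := h
  exact hp y p.end_mem_support

theorem LinkedOff.of_adj (h : LinkedOff G l x y) (hyz : G.Adj y z) (hz : z ∉ l) :
    LinkedOff G l x z :=
  h.trans ⟨hyz.toWalk, by simp [SimpleGraph.Adj.toWalk, h.right_notMem, hz]⟩

theorem LinkedOff.exists_isPathList (h : LinkedOff G l x y) :
    ∃ c, IsPathList G c ∧ c.Disjoint l ∧ c.head? = some x ∧ c.getLast? = some y := by
  classical
  obtain ⟨p, hp⟩ := h
  refine ⟨p.bypass.support, ⟨p.bypass.isChain_adj_support, p.bypass_isPath.support_nodup⟩,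
    fun w hw => hp w (p.support_bypass_subset_support hw), ?_, ?_⟩
  · rw [List.head?_eq_some_head p.bypass.support_ne_nil, p.bypass.head_support]
  · rw [List.getLast?_eq_some_getLast p.bypass.support_ne_nil, p.bypass.getLast_support]

theorem exists_linkedOff_forall_adj (hv : v ∉ l) {o : Option V}
    (h : ∀ a ∈ o, IsAttached G l v a) : ∃ x, LinkedOff G l v x ∧ ∀ a ∈ o, G.Adj a x := by
  rcases o with _ | a
  · exact ⟨v, .refl hv, by simp⟩
  · simpa [IsAttached] using h a rfl

theorem IsAttached.isEntry {a b : V} (ha : IsAttached G l v a) (hab : [a, b] <:+: l) :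
    IsEntry G l v b := by
  obtain ⟨A, C, rfl⟩ := hab
  exact ⟨A ++ [a], C, by simp, by simpa using ha⟩

theorem isEntry_of_mem_head? (h : w ∈ l.head?) : IsEntry G l v w := by
  obtain ⟨C, rfl⟩ := List.head?_eq_some_iff.1 h
  exact ⟨[], C, rfl, by simp⟩

theorem IsLongestPathList.not_isChain_of_perm {c l' : List V} (hl : IsLongestPathList G l)
    (hc : c.Nodup) (hne : c ≠ []) (hdisj : c.Disjoint l) (hperm : l'.Perm (c ++ l)) :
    ¬ l'.IsChain G.Adj := by
  intro hchain
  have hpos := List.length_pos_of_ne_nil hne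
  have hlen : l'.length = c.length + l.length := by simpa using hperm.length_eq
  have := hl.2 ⟨hchain, hperm.nodup_iff.2 (hc.append hl.1.2 hdisj)⟩ (by omega)
  omega

theorem IsLongestPathList.not_adj_head?_of_adj_getLast? {A C : List V}
    (hl : IsLongestPathList G (A ++ C)) (hxy : LinkedOff G (A ++ C) x y)
    (hA : ∀ a ∈ A.getLast?, G.Adj a x) : ¬ ∀ c ∈ C.head?, G.Adj y c := by
  intro hC
  obtain ⟨c, ⟨hchain, hnodup⟩, hdisj, hx, hy⟩ := hxy.exists_isPathList
  refine hl.not_isChain_of_perm (c := c) (l' := A ++ (c ++ C)) hnodup (by rintro rfl; simp at hx)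
    hdisj ?_ ?_
  · simpa using (List.perm_append_comm (l₁ := A) (l₂ := c)).append_right C
  · obtain ⟨hA', hC', -⟩ := List.isChain_append.1 hl.1.1
    refine List.isChain_append.2 ⟨hA', List.isChain_append.2 ⟨hchain, hC', ?_⟩, ?_⟩
    · simpa [hy] using hC
    · simpa [List.head?_append, hx] using hA

theorem IsLongestPathList.not_adj_of_adj_ends {A M C : List V}
    (hl : IsLongestPathList G (A ++ (w :: M ++ z :: C)))
    (hxy : LinkedOff G (A ++ (w :: M ++ z :: C)) x y) (hA : ∀ a ∈ A.getLast?, G.Adj a x)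
    (hM : ∀ m ∈ (w :: M).getLast?, G.Adj m y) : ¬ G.Adj w z := by
  intro hwz
  obtain ⟨c, ⟨hchain, hnodup⟩, hdisj, hx, hy⟩ := hxy.exists_isPathList
  refine hl.not_isChain_of_perm (c := c) (l' := A ++ (c ++ ((w :: M).reverse ++ z :: C))) hnodup
    (by rintro rfl; simp at hx) hdisj ?_ ?_
  · have hswap := (List.perm_append_comm (l₁ := A) (l₂ := c)).append_right
      ((w :: M).reverse ++ z :: C)
    have hrev := (((w :: M).reverse_perm.append_right (z :: C)).append_left A).append_left c
    simpa only [List.append_assoc] using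
      hswap.trans (by simpa only [List.append_assoc] using hrev)
  · obtain ⟨hA', hMC, -⟩ := List.isChain_append.1 hl.1.1
    obtain ⟨hM', hC', -⟩ := List.isChain_append.1 hMC
    refine List.isChain_append.2 ⟨hA', List.isChain_append.2 ⟨hchain, List.isChain_append.2
      ⟨List.isChain_reverse.2 (hM'.imp fun _ _ h => h.symm), hC', ?_⟩, ?_⟩, ?_⟩
    · simpa using hwz
    · rw [List.head?_append_of_ne_nil _ (by simp), List.head?_reverse]
      simpa [hy, SimpleGraph.adj_comm] using hM
    · simpa [List.head?_append, hx] using hA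

theorem IsLongestPathList.not_isAttached_of_isEntry (hl : IsLongestPathList G l) (hv : v ∉ l)
    (hw : IsEntry G l v w) : ¬ IsAttached G l v w := by
  rintro ⟨y, hy, hwy⟩
  obtain ⟨A, C, rfl, hA⟩ := hw
  obtain ⟨x, hx, hAx⟩ := exists_linkedOff_forall_adj hv hA
  exact hl.not_adj_head?_of_adj_getLast? (hx.symm.trans hy) hAx (by simpa using hwy.symm)

theorem IsLongestPathList.not_isAttached_of_mem_getLast? (hl : IsLongestPathList G l)
    (hw : w ∈ l.getLast?) : ¬ IsAttached G l v w := by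
  rintro ⟨y, hy, hwy⟩
  refine IsLongestPathList.not_adj_head?_of_adj_getLast? (A := l) (C := []) (x := y) (y := y)
    (by simpa using hl) (by simpa using LinkedOff.refl hy.right_notMem) ?_ (by simp)
  intro a ha
  obtain rfl := Option.mem_unique ha hw
  exact hwy

theorem IsLongestPathList.not_adj_of_isEntry (hl : IsLongestPathList G l) (hv : v ∉ l)
    (hw : IsEntry G l v w) (hz : IsEntry G l v z) : ¬ G.Adj w z := by
  obtain ⟨A, C, hAC, hA⟩ := hw
  obtain ⟨A', C', hAC', hA'⟩ := hz
  wlog hle : A.length ≤ A'.length generalizing w z A C A' C'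
  · exact fun h => this A' C' hAC' hA' A C hAC hA (by omega) h.symm
  obtain ⟨M, rfl⟩ : A <+: A' :=
    List.prefix_of_prefix_length_le ⟨_, hAC.symm⟩ ⟨_, hAC'.symm⟩ hle
  have hsplit : w :: C = M ++ z :: C' := by simpa [hAC] using hAC'
  rcases M with _ | ⟨m, M⟩
  · obtain ⟨rfl, -⟩ := List.cons_eq_cons.1 hsplit
    exact G.irrefl
  obtain ⟨rfl, rfl⟩ := List.cons_eq_cons.1 hsplit
  obtain ⟨x, hx, hAx⟩ := exists_linkedOff_forall_adj hv hA
  obtain ⟨y, hy, hMy⟩ := exists_linkedOff_forall_adj hv hA'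
  subst hAC
  exact hl.not_adj_of_adj_ends (hx.symm.trans hy) hAx (by simpa using hMy)

theorem IsLongestPathList.exists_isEntry_pair_infix (hl : IsLongestPathList G l)
    (hw : w ∈ l) (hatt : IsAttached G l v w) : ∃ b, IsEntry G l v b ∧ [w, b] <:+: l := by
  obtain ⟨b, hb⟩ := exists_pair_infix_of_mem_of_notMem_getLast? hw
    fun h => hl.not_isAttached_of_mem_getLast? h hatt
  exact ⟨b, hatt.isEntry hb, hb⟩

theorem exists_isAttached_mem_support (hv : v ∉ l) (hw : w ∈ l) (p : G.Walk v w) :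
    ∃ a ∈ p.support, a ∈ l ∧ IsAttached G l v a := by
  obtain ⟨d, hd, hfst, hsnd⟩ := p.exists_boundary_dart {x | LinkedOff G l v x} (.refl hv)
    fun h => h.right_notMem hw
  exact ⟨d.snd, p.dart_snd_mem_support_of_mem_darts hd,
    by_contra fun h => hsnd (LinkedOff.of_adj hfst d.adj h), d.fst, hfst, d.adj.symm⟩

theorem IsLongestPathList.ne_nil [Nonempty V] (hl : IsLongestPathList G l) : l ≠ [] := by
  rintro rfl
  obtain ⟨v⟩ := ‹Nonempty V›
  simpa using hl.2 (j := [v]) ⟨.singleton v, List.nodup_singleton v⟩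

theorem IsPathList.isTraceable [DecidableEq V] (hl : IsPathList G l) (hne : l ≠ [])
    (hall : ∀ v, v ∈ l) : IsTraceable G := by
  refine ⟨_, _, SimpleGraph.Walk.ofSupport l hne hl.1, fun a => ?_⟩
  rw [SimpleGraph.Walk.support_ofSupport]
  exact List.count_eq_one_of_mem hl.2 (hall a)

end LongestPath

section Connectivity

variable {V : Type*} [Fintype V] {G : SimpleGraph V} {k : ℕ} {l : List V} {s v : V}

theorem IsKConnected.exists_walk_forall_notMem (hG : IsKConnected G k) {S : Finset V}
    (hS : #S < k) {x y : V} (hx : x ∉ S) (hy : y ∉ S) :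
    ∃ p : G.Walk x y, ∀ w ∈ p.support, w ∉ S := by
  obtain ⟨p⟩ := (hG.2 S hS).preconnected ⟨x, by simpa using hx⟩ ⟨y, by simpa using hy⟩
  refine ⟨p.map (SimpleGraph.Embedding.induce _).toHom, fun w hw => ?_⟩
  obtain ⟨u, -, rfl⟩ := List.mem_map.1 (SimpleGraph.Walk.support_map _ p ▸ hw)
  exact fun hu => u.2 (mem_coe.2 hu)

theorem IsKConnected.connected (hG : IsKConnected G k) (hk : 0 < k) : G.Connected where
  preconnected x y :=
    have ⟨p, _⟩ := hG.exists_walk_forall_notMem (S := ∅) (by simpa using hk) (by simp) (by simp)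
    ⟨p⟩
  nonempty := Fintype.card_pos_iff.1 (k.zero_le.trans_lt hG.1)

theorem IsKConnected.minDegree_pos [DecidableRel G.Adj] (hG : IsKConnected G k) (hk : 0 < k) :
    0 < G.minDegree := by
  have : Nontrivial V := Fintype.one_lt_card_iff_nontrivial.1 (by have := hG.1; omega)
  exact (hG.connected hk).preconnected.minDegree_pos_of_nontrivial

theorem IsKConnected.le_card_isAttached [DecidableEq V] [DecidablePred (IsAttached G l v)]
    (hG : IsKConnected G k) (hv : v ∉ l) (hs : s ∈ l) (hsatt : ¬ IsAttached G l v s) :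
    k ≤ #{a ∈ l.toFinset | IsAttached G l v a} := by
  by_contra! hlt
  obtain ⟨p, hp⟩ := hG.exists_walk_forall_notMem (x := v) (y := s) hlt (by simp [hv])
    (by simp [hsatt])
  obtain ⟨a, hap, hal, hatt⟩ := exists_isAttached_mem_support hv hs p
  exact hp a hap (by simp [hal, hatt])

theorem IsKConnected.lt_card_isEntry [DecidablePred (IsEntry G l v)] (hG : IsKConnected G k)
    (hl : IsLongestPathList G l) (hs : s ∈ l.head?) (hv : v ∉ l) :
    k < #{w | IsEntry G l v w} := by
  classical
  have hsE : IsEntry G l v s := isEntry_of_mem_head? hs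
  have hsatt := hl.not_isAttached_of_isEntry hv hsE
  have hsucc : #{a ∈ l.toFinset | IsAttached G l v a} ≤
      #(({w | IsEntry G l v w} : Finset V).erase s) := by
    refine card_le_card_of_forall_subsingleton (fun a b => [a, b] <:+: l) ?_ ?_
    · intro a ha
      simp only [mem_filter, List.mem_toFinset] at ha
      obtain ⟨b, hb, hab⟩ := hl.exists_isEntry_pair_infix ha.1 ha.2
      have hbs : b ≠ s := by
        rintro rfl
        exact not_pair_infix_of_mem_head? hl.1.2 hs hab
      exact ⟨b, by simp [hb, hbs], hab⟩
    · exact fun b _ a ha a' ha' => eq_left_of_pair_infix hl.1.2 ha.2 ha'.2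
  have hpos : 0 < #{w | IsEntry G l v w} := card_pos.2 ⟨s, by simpa using hsE⟩
  rw [card_erase_of_mem (by simpa using hsE)] at hsucc
  have := hG.le_card_isAttached hv (List.mem_of_mem_head? hs) hsatt
  omega

theorem IsKConnected.exists_isIndepSet (hG : IsKConnected G k) (hl : IsLongestPathList G l)
    (hs : s ∈ l.head?) (hv : v ∉ l) :
    ∃ I : Finset V, #I = k + 2 ∧ v ∈ I ∧ s ∈ I ∧ G.IsIndepSet I := by
  classical
  let E : Finset V := {w | IsEntry G l v w}
  have hE {w : V} : w ∈ E ↔ IsEntry G l v w := by simp [E]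
  have hvatt {w : V} (hw : w ∈ E) : ¬ G.Adj w v := fun h =>
    hl.not_isAttached_of_isEntry hv (hE.1 hw) ⟨v, .refl hv, h⟩
  have hvE : v ∉ E := fun h => by
    obtain ⟨A, C, rfl, -⟩ := hE.1 h
    simp at hv
  have hindep : G.IsIndepSet (insert v E : Finset V) := by
    rw [coe_insert, SimpleGraph.IsIndepSet, Set.pairwise_insert]
    exact ⟨fun x hx y hy _ => hl.not_adj_of_isEntry hv (hE.1 hx) (hE.1 hy),
      fun w hw _ => ⟨fun h => hvatt hw h.symm, hvatt hw⟩⟩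
  have hcard : k + 2 ≤ #(insert v E) := by
    have : k < #E := hG.lt_card_isEntry hl hs hv
    rw [card_insert_of_notMem hvE]
    omega
  have hvs : {v, s} ⊆ insert v E :=
    insert_subset_insert v (singleton_subset_iff.2 (hE.2 (isEntry_of_mem_head? hs)))
  obtain ⟨I, hvsI, hIE, hI⟩ :=
    exists_subsuperset_card_eq hvs (card_le_two.trans (by omega)) hcard
  exact ⟨I, hI, hvsI (by simp), hvsI (by simp), hindep.mono (coe_subset.2 hIE)⟩

end Connectivity

section Bipartite

variable {V : Type*} {G : SimpleGraph V}

theorem isBipartiteWith_compl_iff {s : Set V} :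
    G.IsBipartiteWith s sᶜ ↔ ∀ ⦃x y⦄, G.Adj x y → (x ∈ s ↔ y ∉ s) := by
  refine ⟨fun h x y hxy => ?_, fun h => ⟨disjoint_compl_right, fun x y hxy => ?_⟩⟩
  · have := h.mem_of_adj hxy
    simp only [Set.mem_compl_iff] at this
    tauto
  · have := h hxy
    simp only [Set.mem_compl_iff]
    tauto

theorem mem_iff_mem_of_isBipartiteWith_compl (hG : G.Preconnected) {s t : Set V}
    (hs : G.IsBipartiteWith s sᶜ) (ht : G.IsBipartiteWith t tᶜ) {u : V} (hus : u ∈ s)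
    (hut : u ∈ t) (w : V) : w ∈ s ↔ w ∈ t := by
  by_contra hw
  obtain ⟨p⟩ := hG u w
  obtain ⟨d, -, hfst, hsnd⟩ :=
    p.exists_boundary_dart {x | x ∈ s ↔ x ∈ t} (iff_of_true hus hut) hw
  have := isBipartiteWith_compl_iff.1 hs d.adj
  have := isBipartiteWith_compl_iff.1 ht d.adj
  simp only [Set.mem_ofPred_eq] at hfst hsnd
  tauto

theorem card_compl_le_card_of_isPathList [Fintype V] [DecidableEq V] {I J : Finset V} {l : List V}
    {s : V} (hI : G.IsBipartiteWith (I : Set V) (I : Set V)ᶜ) (hl : IsPathList G l)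
    (hs : s ∈ l.head?) (hsI : s ∈ I) (hIc : ∀ w ∉ I, w ∈ l) (hJ : ∀ w ∈ I, w ∈ l → w ∈ J) :
    #Iᶜ ≤ #J := by
  refine card_le_card_of_forall_subsingleton (fun b a => [a, b] <:+: l) (fun b hb => ?_)
    fun a _ b hb b' hb' => eq_right_of_pair_infix hl.2 hb.2 hb'.2
  have hbI : b ∉ I := mem_compl.1 hb
  obtain ⟨a, hab⟩ := exists_pair_infix_of_mem_of_notMem_head? (hIc b hbI)
    fun h => hbI (Option.mem_unique h hs ▸ hsI)
  have hadj : G.Adj a b := by simpa using hl.1.infix hab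
  have haI : a ∈ I := (isBipartiteWith_compl_iff.1 hI hadj).2 hbI
  exact ⟨a, hJ a haI (hab.subset (by simp)), hab⟩

theorem IsKConnected.isTraceable_of_isBipartiteWith [Fintype V] [DecidableEq V] {k : ℕ}
    (hG : IsKConnected G k) (hk : 0 < k)
    (hbip : ∀ I : Finset V, #I = k + 2 → G.IsIndepSet I →
      G.IsBipartiteWith (I : Set V) (I : Set V)ᶜ ∧ #I ≤ #Iᶜ) : IsTraceable G := by
  have hconn := hG.connected hk
  have := hconn.nonempty
  obtain ⟨l, hl⟩ := exists_isLongestPathList G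
  refine hl.1.isTraceable hl.ne_nil ?_
  by_contra! ⟨v, hv⟩
  obtain ⟨s, hs⟩ : ∃ s, s ∈ l.head? := ⟨_, List.head?_eq_some_head hl.ne_nil⟩
  obtain ⟨I, hIcard, hvI, hsI, hI⟩ := hG.exists_isIndepSet hl hs hv
  obtain ⟨hIbip, hIle⟩ := hbip I hIcard hI
  have hoff : ∀ w ∉ I, w ∈ l := by
    intro w
    contrapose!
    intro hw
    obtain ⟨J, hJcard, hwJ, hsJ, hJ⟩ := hG.exists_isIndepSet hl hs hw
    exact (mem_iff_mem_of_isBipartiteWith_compl hconn.preconnected hIbip (hbip J hJcard hJ).1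
      hsI hsJ w).2 hwJ
  have hle : #Iᶜ ≤ #(I.erase v) := card_compl_le_card_of_isPathList hIbip hl.1 hs hsI hoff
    fun w hwI hwl => mem_erase.2 ⟨fun h => hv (h ▸ hwl), hwI⟩
  have := card_erase_lt_of_mem hvI
  omega

end Bipartite

theorem eq_and_eq_of_sq_add_sq_le {a b c : ℝ} (ha : 0 ≤ a) (hab : a ≤ b) (hac : a ≤ c)
    (h : b ^ 2 + c ^ 2 ≤ 2 * a ^ 2) : b = a ∧ c = a := by
  have hb := pow_le_pow_left₀ ha hab 2
  have hc := pow_le_pow_left₀ ha hac 2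
  exact ⟨le_antisymm (le_of_sq_le_sq (by linarith) ha) hab,
    le_antisymm (le_of_sq_le_sq (by linarith) ha) hac⟩

theorem sq_add_sq_le_of_div_le {m e δ Δ : ℝ} (hm : 0 < m) (hΔ : 0 < Δ)
    (h : m / Δ ≤ (2 * m ^ 2 * δ ^ 2 - e ^ 2) / (m * Δ ^ 3)) :
    (m * Δ) ^ 2 + e ^ 2 ≤ 2 * (m * δ) ^ 2 := by
  rw [le_div_iff₀ (by positivity)] at h
  have : m / Δ * (m * Δ ^ 3) = (m * Δ) ^ 2 := by field_simp
  linarith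

section DegreeSum

variable {V : Type*} [Fintype V] {G : SimpleGraph V} [DecidableRel G.Adj] {I : Finset V}

theorem card_div_maxDegree_le_invDegree (hδ : 0 < G.minDegree) :
    (Fintype.card V : ℝ) / G.maxDegree ≤ invDegree G := by
  have hdeg : ∀ u ∈ (univ : Finset V), 1 / (G.maxDegree : ℝ) ≤ 1 / (G.degree u : ℝ) := by
    intro u _
    have hpos : 0 < G.degree u := hδ.trans_le (G.minDegree_le_degree u)
    gcongr
    exact G.degree_le_maxDegree u
  simpa [invDegree, div_eq_mul_inv] using card_nsmul_le_sum _ _ _ hdeg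

theorem card_biUnion_incidenceFinset [DecidableEq V] (hI : G.IsIndepSet I) :
    #(I.biUnion fun u => G.incidenceFinset u) = ∑ u ∈ I, G.degree u := by
  rw [card_biUnion fun x hx y hy hxy => ?_]
  · simp
  · rw [Function.onFun, ← disjoint_coe, Set.disjoint_iff_inter_eq_empty]
    simpa using G.incidenceSet_inter_incidenceSet_of_not_adj (hI hx hy hxy) hxy

theorem biUnion_incidenceFinset_subset [DecidableEq V] :
    (I.biUnion fun u => G.incidenceFinset u) ⊆ G.edgeFinset :=
  biUnion_subset.2 fun u _ => G.incidenceFinset_subset u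

theorem sum_degree_le_card_edgeFinset (hI : G.IsIndepSet I) :
    ∑ u ∈ I, G.degree u ≤ #G.edgeFinset := by
  classical
  exact card_biUnion_incidenceFinset hI ▸ card_le_card biUnion_incidenceFinset_subset

theorem isBipartiteWith_compl_of_card_edgeFinset_le (hI : G.IsIndepSet I)
    (h : #G.edgeFinset ≤ ∑ u ∈ I, G.degree u) : G.IsBipartiteWith (I : Set V) (I : Set V)ᶜ := by
  classical
  have hcover := eq_of_subset_of_card_le (biUnion_incidenceFinset_subset (G := G) (I := I))
    (card_biUnion_incidenceFinset hI ▸ h)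
  refine isBipartiteWith_compl_iff.2 fun x y hxy => ⟨fun hx hy => hI hx hy hxy.ne hxy, fun hy => ?_⟩
  have hmem : s(x, y) ∈ G.edgeFinset := by simpa using hxy
  rw [← hcover, mem_biUnion] at hmem
  obtain ⟨u, hu, he⟩ := hmem
  rw [SimpleGraph.mem_incidenceFinset] at he
  rcases Sym2.mem_iff.1 he.2 with rfl | rfl
  exacts [hu, absurd hu hy]

theorem maxDegree_eq_and_card_edgeFinset_eq (hδ : 0 < G.minDegree) (hI : G.IsIndepSet I)
    (hne : I.Nonempty)
    (h : invDegree G ≤ ((Fintype.card V : ℝ) - #I) / G.maxDegree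
      + (2 * (#I : ℝ) ^ 2 * (G.minDegree : ℝ) ^ 2 - (#G.edgeFinset : ℝ) ^ 2)
        / ((#I : ℝ) * (G.maxDegree : ℝ) ^ 3)) :
    G.maxDegree = G.minDegree ∧ #G.edgeFinset = #I * G.minDegree := by
  have hδΔ : G.minDegree ≤ G.maxDegree := G.minDegree_le_maxDegree
  have he : #I * G.minDegree ≤ #G.edgeFinset :=
    (card_nsmul_le_sum I _ _ fun u _ => G.minDegree_le_degree u).trans
      (sum_degree_le_card_edgeFinset hI)
  have hm : 0 < #I := hne.card_pos
  have hdiv : (#I : ℝ) / G.maxDegree ≤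
      (2 * (#I : ℝ) ^ 2 * (G.minDegree : ℝ) ^ 2 - (#G.edgeFinset : ℝ) ^ 2)
        / ((#I : ℝ) * (G.maxDegree : ℝ) ^ 3) := by
    have := (card_div_maxDegree_le_invDegree hδ).trans h
    rw [sub_div] at this
    linarith
  have hsq := sq_add_sq_le_of_div_le (by exact_mod_cast hm)
    (by exact_mod_cast hδ.trans_le hδΔ) hdiv
  obtain ⟨hΔ, he'⟩ := eq_and_eq_of_sq_add_sq_le (by positivity)
    (mul_le_mul_of_nonneg_left (by exact_mod_cast hδΔ) (by positivity)) (by exact_mod_cast he) hsq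
  exact ⟨Nat.eq_of_mul_eq_mul_left hm (by exact_mod_cast hΔ), by exact_mod_cast he'⟩

theorem isBipartiteWith_compl_and_card_eq_of_invDegree_le [DecidableEq V]
    (hδ : 0 < G.minDegree) (hI : G.IsIndepSet I) (hne : I.Nonempty)
    (h : invDegree G ≤ ((Fintype.card V : ℝ) - #I) / G.maxDegree
      + (2 * (#I : ℝ) ^ 2 * (G.minDegree : ℝ) ^ 2 - (#G.edgeFinset : ℝ) ^ 2)
        / ((#I : ℝ) * (G.maxDegree : ℝ) ^ 3)) :
    G.IsBipartiteWith (I : Set V) (I : Set V)ᶜ ∧ #I = #Iᶜ := by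
  obtain ⟨hΔ, he⟩ := maxDegree_eq_and_card_edgeFinset_eq hδ hI hne h
  have hreg : ∀ u, G.degree u = G.minDegree := fun u =>
    le_antisymm (hΔ ▸ G.degree_le_maxDegree u) (G.minDegree_le_degree u)
  refine ⟨isBipartiteWith_compl_of_card_edgeFinset_le hI (by simp [hreg, he]), ?_⟩
  have hcard : Fintype.card V = 2 * #I := by
    have hsum := G.sum_degrees_eq_twice_card_edges
    simp only [hreg, sum_const, card_univ, smul_eq_mul] at hsum
    rw [he, ← mul_assoc] at hsum
    exact Nat.eq_of_mul_eq_mul_right hδ hsum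
  rw [card_compl]
  omega

end DegreeSum

theorem stmt14_general {V : Type*} [Fintype V] [DecidableEq V] (G : SimpleGraph V)
    [DecidableRel G.Adj] (k : ℕ) (hk : 1 ≤ k) (hconn : IsKConnected G k)
    (h : invDegree G ≤ ((Fintype.card V : ℝ) - k - 2) / (G.maxDegree : ℝ)
        + (2 * ((k : ℝ) + 2) ^ 2 * (G.minDegree : ℝ) ^ 2 - (G.edgeFinset.card : ℝ) ^ 2)
          / (((k : ℝ) + 2) * (G.maxDegree : ℝ) ^ 3)) :
    IsTraceable G := by
  refine hconn.isTraceable_of_isBipartiteWith hk fun I hcard hI => ?_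
  have hne : I.Nonempty := card_pos.1 (by omega)
  have hbip := isBipartiteWith_compl_and_card_eq_of_invDegree_le (hconn.minDegree_pos hk) hI hne
    (by simpa [hcard, sub_sub] using h)
  exact ⟨hbip.1, hbip.2.le⟩

/-- If `G` is a `k`-connected (`k ≥ 1`) graph with `n ≥ 9` vertices, `e` edges, minimum degree
`δ ≥ 1`, and maximum degree `Δ`, and `Inv(G) ≤ (n − k − 2)/Δ + (2(k+2)²δ² − e²)/((k+2)Δ³)`,
then `G` is traceable. -/
theorem stmt14 {V : Type*} [Fintype V] [DecidableEq V] (G : SimpleGraph V) [DecidableRel G.Adj]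
    (k : ℕ) (hk : 1 ≤ k) (hconn : IsKConnected G k) (hn : 9 ≤ Fintype.card V)
    (hδ : 1 ≤ G.minDegree)
    (h : invDegree G ≤ ((Fintype.card V : ℝ) - k - 2) / (G.maxDegree : ℝ)
        + (2 * ((k : ℝ) + 2) ^ 2 * (G.minDegree : ℝ) ^ 2 - (G.edgeFinset.card : ℝ) ^ 2)
          / (((k : ℝ) + 2) * (G.maxDegree : ℝ) ^ 3)) :
    IsTraceable G :=
  stmt14_general G k hk hconn h
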